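/- Let α ∈ (0,1], let d ∈ ℕ with d > α, let i ∈ {1,…,d}, and let x, y ∈ ℝ^d satisfy xᵢ > 0, yᵢ > 0 and x ≠ y. Then 0 ≤ 1/|x − y|^(d−α) − 1/|x̂ − y|^(d−α) ≤ max(2, 2(d−α)) · |x − x̂| / (|x − y|^(d−α) · |x̂ − y|). -/

import Mathlib

/-!
Put `a = |x − y|`, `b = |x̂ − y|`, `s = d − α > 0`. Since `b² = a² + 4 xᵢ yᵢ`, the reflected point is
farther from `y`, so `0 < a ≤ b`, which gives the lower bound. For the upper bound, multiplying by
`a ^ s` reduces the claim to `1 - t ^ s ≤ max 2 (2 s) · |x − x̂| / b` with `t = a / b ∈ (0, 1]`.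
Bernoulli's inequality (or `t ≤ t ^ s` when `s ≤ 1`) gives `1 - t ^ s ≤ max 1 s · (1 - t)`
(`one_sub_rpow_le`), and `b - a ≤ |x − x̂|` by the triangle inequality.
-/

/-- The reflection `x̂ = x − 2xᵢeᵢ` of `x ∈ ℝ^d` across the hyperplane `{y : yᵢ = 0}`. -/
noncomputable def reflectHyp (d : ℕ) (i : Fin d) (x : EuclideanSpace ℝ (Fin d)) :
    EuclideanSpace ℝ (Fin d) :=
  x - (2 * x i) • EuclideanSpace.single i (1 : ℝ)

theorem one_sub_rpow_le {t s : ℝ} (ht0 : 0 < t) (ht1 : t ≤ 1) :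
    1 - t ^ s ≤ max 1 s * (1 - t) := by
  rcases le_total s 1 with h | h
  · have := Real.rpow_le_rpow_of_exponent_ge ht0 ht1 h
    rw [Real.rpow_one] at this
    rw [max_eq_left h]
    linarith
  · have := one_add_mul_self_le_rpow_one_add (s := t - 1) (by linarith) h
    rw [add_sub_cancel] at this
    rw [max_eq_right h]
    linarith

theorem norm_sub_le_norm_reflectHyp_sub (d : ℕ) (i : Fin d) (x y : EuclideanSpace ℝ (Fin d))
    (hx : 0 < x i) (hy : 0 < y i) : ‖x - y‖ ≤ ‖reflectHyp d i x - y‖ := by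
  have e : reflectHyp d i x - y = (x - y) - (2 * x i) • EuclideanSpace.single i (1 : ℝ) := by
    unfold reflectHyp
    abel
  have h : ‖reflectHyp d i x - y‖ ^ 2 = ‖x - y‖ ^ 2 + 4 * (x i * y i) := by
    rw [e, norm_sub_sq_real, inner_smul_right, EuclideanSpace.inner_single_right, norm_smul,
      mul_pow]
    simp [mul_pow]
    ring
  have := mul_pos hx hy
  exact le_of_sq_le_sq (by linarith) (norm_nonneg _)

/-- Let `α ∈ (0,1]`, `d > α`, and let `x, y ∈ ℝ^d` satisfy `xᵢ > 0`, `yᵢ > 0`, `x ≠ y`. Then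
`0 ≤ 1/|x − y|^(d−α) − 1/|x̂ − y|^(d−α)
   ≤ max(2, 2(d−α)) · |x − x̂| / (|x − y|^(d−α) · |x̂ − y|)`. -/
theorem stmt_3 (d : ℕ) (α : ℝ) (hα0 : 0 < α) (hα1 : α ≤ 1) (hd : α < (d : ℝ))
    (i : Fin d) (x y : EuclideanSpace ℝ (Fin d))
    (hx : 0 < x i) (hy : 0 < y i) (hxy : x ≠ y) :
    0 ≤ 1 / ‖x - y‖ ^ ((d : ℝ) - α) - 1 / ‖reflectHyp d i x - y‖ ^ ((d : ℝ) - α) ∧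
    1 / ‖x - y‖ ^ ((d : ℝ) - α) - 1 / ‖reflectHyp d i x - y‖ ^ ((d : ℝ) - α) ≤
      max 2 (2 * ((d : ℝ) - α)) * ‖x - reflectHyp d i x‖ /
        (‖x - y‖ ^ ((d : ℝ) - α) * ‖reflectHyp d i x - y‖) := by
  have ha : 0 < ‖x - y‖ := norm_pos_iff.2 (sub_ne_zero.2 hxy)
  have hab := norm_sub_le_norm_reflectHyp_sub d i x y hx hy
  have hc : ‖reflectHyp d i x - y‖ ≤ ‖x - reflectHyp d i x‖ + ‖x - y‖ := by
    rw [norm_sub_rev x (reflectHyp d i x)]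
    exact norm_sub_le_norm_sub_add_norm_sub _ _ _
  have hs : 0 < (d : ℝ) - α := sub_pos.2 hd
  generalize (d : ℝ) - α = s at *
  generalize ‖x - y‖ = a at *
  generalize ‖reflectHyp d i x - y‖ = b at *
  have hc0 : 0 ≤ ‖x - reflectHyp d i x‖ := norm_nonneg _
  generalize ‖x - reflectHyp d i x‖ = c at *
  have hb : 0 < b := ha.trans_le hab
  have has : 0 < a ^ s := Real.rpow_pos_of_pos ha s
  have hbs : 0 < b ^ s := Real.rpow_pos_of_pos hb s
  refine ⟨sub_nonneg.2 (one_div_le_one_div_of_le has (Real.rpow_le_rpow ha.le hab hs.le)), ?_⟩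
  have key := one_sub_rpow_le (s := s) (div_pos ha hb) ((div_le_one hb).2 hab)
  have hM : max 1 s ≤ max 2 (2 * s) := max_le_max (by norm_num) (by linarith)
  have hcb : 1 - a / b ≤ c / b := by
    rw [one_sub_div hb.ne']
    gcongr
    linarith
  calc 1 / a ^ s - 1 / b ^ s = (1 - (a / b) ^ s) / a ^ s := by
        rw [Real.div_rpow ha.le hb.le]
        field_simp
    _ ≤ (max 2 (2 * s) * (c / b)) / a ^ s := by
        gcongr
        calc _ ≤ max 1 s * (1 - a / b) := key
          _ ≤ max 1 s * (c / b) := by gcongr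
          _ ≤ max 2 (2 * s) * (c / b) := by gcongr
    _ = max 2 (2 * s) * c / (a ^ s * b) := by
        field_simp
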